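/- arXiv:2207.03381 — 4 statements merged into one kernel-verified Lean document; each statement's English description precedes it below -/
import Mathlib

section
/- Let G be a forest whose connected components T_1, …, T_m (m ≥ 1) are pairwise disjoint trees, each T_i having at least one edge, vertex bipartition (X_i, Y_i), and admitting a set-ordered graceful labeling f_i with max f_i(X_i) < min f_i(Y_i). Let p be the total number of vertices of G (so G has p − m edges). Then G admits a flawed set-ordered graceful labeling: there exists an injective map g : V(G) → {0, 1, …, p − 1} such that max g(X) < min g(Y), where X = X_1 ∪ … ∪ X_m and Y = Y_1 ∪ … ∪ Y_m, and the p − m induced edge labels g(uv) = |g(u) − g(v)|, over all edges uv of G, are pairwise distinct (hence form a (p − m)-element subset of {1, …, p − 1}). -/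
/-- `(X, Y)` is a bipartition of the graph `G`: every vertex lies in exactly one of `X, Y`,
and every edge joins a vertex of `X` to a vertex of `Y`. -/
def IsBipartitionOf {V : Type} (G : SimpleGraph V) (X Y : Set V) : Prop :=
  (∀ v : V, v ∈ X ∨ v ∈ Y) ∧ Disjoint X Y ∧
    ∀ ⦃u v : V⦄, G.Adj u v → (u ∈ X ∧ v ∈ Y) ∨ (u ∈ Y ∧ v ∈ X)

/-- The vertex/edge color membership constraints common to all `(k,d)`-total colorings:
colors of `X`-vertices are multiples of `d`, colors of `Y`-vertices and of edges lie in
`{k + jd : j ≥ 0}`. -/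
def KDTotalVertexCond {V : Type} (G : SimpleGraph V) (X Y : Set V) (k d : ℕ)
    (fV : V → ℕ) (fE : Sym2 V → ℕ) : Prop :=
  (∀ x ∈ X, d ∣ fV x) ∧
  (∀ y ∈ Y, ∃ j : ℕ, fV y = k + j * d) ∧
  (∀ ⦃u v : V⦄, G.Adj u v → ∃ j : ℕ, fE s(u, v) = k + j * d)

/-- The set of colors used on the edges of `G`. -/
def EdgeColorSet {V : Type} (G : SimpleGraph V) (fE : Sym2 V → ℕ) : Set ℕ :=
  {c : ℕ | ∃ u v : V, G.Adj u v ∧ fE s(u, v) = c}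

/-- The set `{k + jd : 0 ≤ j ≤ q - 1}`. -/
def ArithProgSet (k d q : ℕ) : Set ℕ := {c : ℕ | ∃ j : ℕ, j < q ∧ c = k + j * d}

/-- The odd set `{k + (2j - 1)d : 1 ≤ j ≤ q}`. -/
def OddArithProgSet (k d q : ℕ) : Set ℕ :=
  {c : ℕ | ∃ j : ℕ, 1 ≤ j ∧ j ≤ q ∧ c = k + (2 * j - 1) * d}

/-- A graceful `(k,d)`-total coloring of `G` (with bipartition `(X,Y)` and `q` edges). -/
def GracefulKDTotalColoring {V : Type} (G : SimpleGraph V) (X Y : Set V) (k d q : ℕ)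
    (fV : V → ℕ) (fE : Sym2 V → ℕ) : Prop :=
  KDTotalVertexCond G X Y k d fV fE ∧
  (∀ ⦃u v : V⦄, G.Adj u v → fE s(u, v) = Nat.dist (fV u) (fV v)) ∧
  EdgeColorSet G fE = ArithProgSet k d q

/-- A harmonious `(k,d)`-total coloring of `G`:
`f(uv) - k ≡ f(u) + f(v) - k (mod qd)` for every edge `uv`. -/
def HarmoniousKDTotalColoring {V : Type} (G : SimpleGraph V) (X Y : Set V) (k d q : ℕ)
    (fV : V → ℕ) (fE : Sym2 V → ℕ) : Prop :=
  KDTotalVertexCond G X Y k d fV fE ∧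
  (∀ ⦃u v : V⦄, G.Adj u v →
    Int.ModEq ((q * d : ℕ) : ℤ) ((fE s(u, v) : ℤ) - (k : ℤ))
      (((fV u : ℤ) + (fV v : ℤ)) - (k : ℤ))) ∧
  EdgeColorSet G fE = ArithProgSet k d q

/-- An edge-magic `(k,d)`-total coloring: `f(u) + f(uv) + f(v)` is constant. -/
def EdgeMagicKDTotalColoring {V : Type} (G : SimpleGraph V) (X Y : Set V) (k d q : ℕ)
    (fV : V → ℕ) (fE : Sym2 V → ℕ) : Prop :=
  KDTotalVertexCond G X Y k d fV fE ∧
  (∃ c : ℕ, ∀ ⦃u v : V⦄, G.Adj u v → fV u + fE s(u, v) + fV v = c) ∧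
  EdgeColorSet G fE = ArithProgSet k d q

/-- An edge-difference `(k,d)`-total coloring: `f(uv) + |f(u) - f(v)|` is constant. -/
def EdgeDifferenceKDTotalColoring {V : Type} (G : SimpleGraph V) (X Y : Set V) (k d q : ℕ)
    (fV : V → ℕ) (fE : Sym2 V → ℕ) : Prop :=
  KDTotalVertexCond G X Y k d fV fE ∧
  (∃ c : ℕ, ∀ ⦃u v : V⦄, G.Adj u v → fE s(u, v) + Nat.dist (fV u) (fV v) = c) ∧
  EdgeColorSet G fE = ArithProgSet k d q

/-- A graceful-difference `(k,d)`-total coloring: `||f(u) - f(v)| - f(uv)|` is constant. -/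
def GracefulDifferenceKDTotalColoring {V : Type} (G : SimpleGraph V) (X Y : Set V) (k d q : ℕ)
    (fV : V → ℕ) (fE : Sym2 V → ℕ) : Prop :=
  KDTotalVertexCond G X Y k d fV fE ∧
  (∃ c : ℕ, ∀ ⦃u v : V⦄, G.Adj u v →
    ((Nat.dist (fV u) (fV v) : ℤ) - (fE s(u, v) : ℤ)).natAbs = c) ∧
  EdgeColorSet G fE = ArithProgSet k d q

/-- A felicitous-difference `(k,d)`-total coloring: `|f(u) + f(v) - f(uv)|` is constant. -/
def FelicitousDifferenceKDTotalColoring {V : Type} (G : SimpleGraph V) (X Y : Set V) (k d q : ℕ)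
    (fV : V → ℕ) (fE : Sym2 V → ℕ) : Prop :=
  KDTotalVertexCond G X Y k d fV fE ∧
  (∃ c : ℕ, ∀ ⦃u v : V⦄, G.Adj u v →
    (((fV u : ℤ) + (fV v : ℤ)) - (fE s(u, v) : ℤ)).natAbs = c) ∧
  EdgeColorSet G fE = ArithProgSet k d q

/-- An edge-antimagic `(k,d)`-total coloring: the sums `f(u) + f(uv) + f(v)` over the edges
form the set `{2k + 2(a+j)d : 0 ≤ j ≤ q - 1}` for some `a ≥ 0`. -/
def EdgeAntimagicKDTotalColoring {V : Type} (G : SimpleGraph V) (X Y : Set V) (k d q : ℕ)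
    (fV : V → ℕ) (fE : Sym2 V → ℕ) : Prop :=
  KDTotalVertexCond G X Y k d fV fE ∧
  ∃ a : ℕ, {c : ℕ | ∃ u v : V, G.Adj u v ∧ fV u + fE s(u, v) + fV v = c}
      = {c : ℕ | ∃ j : ℕ, j < q ∧ c = 2 * k + 2 * (a + j) * d}

/-- An odd-edge graceful-difference `(k,d)`-total coloring. -/
def OddEdgeGracefulDifferenceKDTotalColoring {V : Type} (G : SimpleGraph V) (X Y : Set V)
    (k d q : ℕ) (fV : V → ℕ) (fE : Sym2 V → ℕ) : Prop :=
  KDTotalVertexCond G X Y k d fV fE ∧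
  (∃ c : ℕ, ∀ ⦃u v : V⦄, G.Adj u v →
    ((Nat.dist (fV u) (fV v) : ℤ) - (fE s(u, v) : ℤ)).natAbs = c) ∧
  EdgeColorSet G fE = OddArithProgSet k d q

/-- An odd-edge edge-difference `(k,d)`-total coloring. -/
def OddEdgeEdgeDifferenceKDTotalColoring {V : Type} (G : SimpleGraph V) (X Y : Set V)
    (k d q : ℕ) (fV : V → ℕ) (fE : Sym2 V → ℕ) : Prop :=
  KDTotalVertexCond G X Y k d fV fE ∧
  (∃ c : ℕ, ∀ ⦃u v : V⦄, G.Adj u v → fE s(u, v) + Nat.dist (fV u) (fV v) = c) ∧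
  EdgeColorSet G fE = OddArithProgSet k d q

/-- An odd-edge edge-magic `(k,d)`-total coloring. -/
def OddEdgeEdgeMagicKDTotalColoring {V : Type} (G : SimpleGraph V) (X Y : Set V)
    (k d q : ℕ) (fV : V → ℕ) (fE : Sym2 V → ℕ) : Prop :=
  KDTotalVertexCond G X Y k d fV fE ∧
  (∃ c : ℕ, ∀ ⦃u v : V⦄, G.Adj u v → fV u + fE s(u, v) + fV v = c) ∧
  EdgeColorSet G fE = OddArithProgSet k d q

/-- An odd-edge felicitous-difference `(k,d)`-total coloring. -/
def OddEdgeFelicitousDifferenceKDTotalColoring {V : Type} (G : SimpleGraph V) (X Y : Set V)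
    (k d q : ℕ) (fV : V → ℕ) (fE : Sym2 V → ℕ) : Prop :=
  KDTotalVertexCond G X Y k d fV fE ∧
  (∃ c : ℕ, ∀ ⦃u v : V⦄, G.Adj u v →
    (((fV u : ℤ) + (fV v : ℤ)) - (fE s(u, v) : ℤ)).natAbs = c) ∧
  EdgeColorSet G fE = OddArithProgSet k d q

/-- A set-ordered graceful labeling of `G` (with bipartition `(X,Y)` and `q` edges):
an injective map into `{0, …, q}` whose induced edge labels `|f(u) - f(v)|` are exactly
`{1, …, q}`, with `max f(X) < min f(Y)`. -/
def SetOrderedGracefulLabeling {V : Type} (G : SimpleGraph V) (X Y : Set V)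
    (f : V → ℕ) (q : ℕ) : Prop :=
  Function.Injective f ∧ (∀ v : V, f v ≤ q) ∧
  (∀ x ∈ X, ∀ y ∈ Y, f x < f y) ∧
  {c : ℕ | ∃ u v : V, G.Adj u v ∧ Nat.dist (f u) (f v) = c} = Set.Icc 1 q

/-!
Call a labeling with values in `{0, …, n - 1}` split at `k` if it is below `k` on `X` and at least
`k` on `Y`. Given labelings of two disjoint graphs, split the first at `k`, move its labels on `Y`
up by the range `n'` of the second, and place the second, translated by `k`, into the gap
`{k, …, k + n' - 1}` thus opened. Edge labels of the second graph do not change and stay below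
`n'`; those of the first all grow by `n'`. Hence no edge label occurs twice, and `X`-labels still
precede `Y`-labels. Iterating over the components labels the whole forest. For a single tree,
distinctness of the edge labels follows by counting: there are exactly as many edges as labels.
-/

section OpenGap

/-- The relabeling of `ℕ` that opens a gap of length `n` at `k`: it frees the values
`k, …, k + n - 1` by moving everything from `k` on up by `n`. -/
def openGap (k n a : ℕ) : ℕ := if a < k then a else a + n

variable {k n a b : ℕ}

theorem openGap_of_lt (h : a < k) : openGap k n a = a := if_pos h

theorem openGap_of_le (h : k ≤ a) : openGap k n a = a + n := if_neg h.not_gt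

theorem openGap_strictMono : StrictMono (openGap k n) := fun a b hab => by
  unfold openGap
  split_ifs <;> omega

theorem openGap_le_add : openGap k n a ≤ a + n := by
  unfold openGap
  split_ifs <;> omega

theorem openGap_ne_add (hb : b < n) : openGap k n a ≠ k + b := by
  unfold openGap
  split_ifs <;> omega

end OpenGap

section EdgeLabel

variable {V W : Type*}

/-- The label `|f u - f v|` that a vertex labeling `f` induces on the edge `s(u, v)`. -/
def edgeLabel (f : V → ℕ) : Sym2 V → ℕ :=
  Sym2.lift ⟨fun u v => Nat.dist (f u) (f v), fun _ _ => Nat.dist_comm _ _⟩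

theorem edgeLabel_mk (f : V → ℕ) (u v : V) : edgeLabel f s(u, v) = Nat.dist (f u) (f v) := rfl

theorem edgeLabel_comp (f : V → ℕ) (φ : W → V) :
    edgeLabel (f ∘ φ) = edgeLabel f ∘ Sym2.map φ :=
  funext <| Sym2.ind fun _ _ => rfl

theorem edgeLabel_mk_of_le {f : V → ℕ} {u v : V} (h : f u ≤ f v) :
    edgeLabel f s(u, v) = f v - f u :=
  Nat.dist_eq_sub_of_le h

theorem injOn_edgeLabel_spanningCoe {s : Set V} {G : SimpleGraph s} {f : V → ℕ} :
    Set.InjOn (edgeLabel f) G.spanningCoe.edgeSet ↔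
      Set.InjOn (edgeLabel (f ∘ Subtype.val)) G.edgeSet := by
  rw [edgeLabel_comp, (Sym2.map.injective Subtype.val_injective).injOn.comp_iff,
    SimpleGraph.edgeSet_map]
  rfl

theorem injOn_edgeLabel_of_isTree [Finite V] {T : SimpleGraph V} (hT : T.IsTree) {f : V → ℕ}
    (hf : edgeLabel f '' T.edgeSet = Set.Icc 1 (Nat.card V - 1)) :
    Set.InjOn (edgeLabel f) T.edgeSet := by
  have hcard : Nat.card T.edgeSet + 1 = Nat.card V :=
    (SimpleGraph.isTree_iff_connected_and_card.mp hT).2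
  refine Set.injOn_of_ncard_image_eq ?_
  rw [hf, ← hcard, Nat.add_sub_cancel, Set.ncard_eq_toFinset_card', Set.toFinset_Icc, Nat.card_Icc,
    Nat.add_sub_cancel, Nat.card_coe_set_eq]

end EdgeLabel

theorem exists_eq_mk_of_isBipartiteWith {V : Type*} {G : SimpleGraph V} {X Y : Set V}
    (h : G.IsBipartiteWith X Y) {e : Sym2 V} (he : e ∈ G.edgeSet) :
    ∃ x ∈ X, ∃ y ∈ Y, e = s(x, y) := by
  induction e with
  | _ u v =>
    rcases h.mem_of_adj he with ⟨hu, hv⟩ | ⟨hu, hv⟩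
    · exact ⟨u, hu, v, hv, rfl⟩
    · exact ⟨v, hv, u, hu, Sym2.eq_swap⟩

section InsertLabeling

variable {V : Type*} {f f' : V → ℕ} {S W : Set V} {k n : ℕ} {u v x y : V}

open Classical in
/-- The labeling that opens a gap of length `n` at `k` in the labeling `f` and places the labeling
`f'` of the vertices in `W`, translated by `k`, into that gap. -/
noncomputable def insertLabeling (W : Set V) (k n : ℕ) (f f' : V → ℕ) : V → ℕ :=
  W.piecewise (k + f' ·) (openGap k n ∘ f)

theorem insertLabeling_of_mem (hv : v ∈ W) : insertLabeling W k n f f' v = k + f' v :=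
  if_pos hv

theorem insertLabeling_of_notMem (hv : v ∉ W) :
    insertLabeling W k n f f' v = openGap k n (f v) :=
  if_neg hv

theorem injOn_insertLabeling (hSW : Disjoint S W) (hf : Set.InjOn f S) (hf' : Set.InjOn f' W)
    (hlt : ∀ w ∈ W, f' w < n) : Set.InjOn (insertLabeling W k n f f') (S ∪ W) := by
  have hS : Set.EqOn (openGap k n ∘ f) (insertLabeling W k n f f') S := fun v hv =>
    (insertLabeling_of_notMem (hSW.notMem_of_mem_left hv)).symm
  have hW : Set.EqOn ((k + ·) ∘ f') (insertLabeling W k n f f') W := fun v hv =>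
    (insertLabeling_of_mem hv).symm
  refine (Set.injOn_union hSW).mpr
    ⟨(openGap_strictMono.injective.comp_injOn hf).congr hS,
      ((add_right_injective k).comp_injOn hf').congr hW, fun v hv w hw => ?_⟩
  rw [← hS hv, ← hW hw]
  exact openGap_ne_add (hlt w hw)

theorem edgeLabel_insertLabeling_of_mem (hu : u ∈ W) (hv : v ∈ W) :
    edgeLabel (insertLabeling W k n f f') s(u, v) = edgeLabel f' s(u, v) := by
  rw [edgeLabel_mk, edgeLabel_mk, insertLabeling_of_mem hu, insertLabeling_of_mem hv,
    Nat.dist_add_add_left]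

theorem edgeLabel_insertLabeling_of_notMem (hx : x ∉ W) (hy : y ∉ W) (hxk : f x < k)
    (hky : k ≤ f y) :
    edgeLabel (insertLabeling W k n f f') s(x, y) = edgeLabel f s(x, y) + n := by
  have hxy : f x ≤ f y := hxk.le.trans hky
  rw [edgeLabel_mk, edgeLabel_mk, insertLabeling_of_notMem hx, insertLabeling_of_notMem hy,
    openGap_of_lt hxk, openGap_of_le hky, Nat.dist_eq_sub_of_le (Nat.le_add_right_of_le hxy),
    Nat.dist_eq_sub_of_le hxy, Nat.sub_add_comm hxy]

end InsertLabeling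

/-- `f` is a flawed set-ordered graceful labeling, with values in `{0, …, n - 1}`, of the bipartite
graph with parts `X`, `Y` and the edges of `G`: the induced edge labels are distinct, but need not
exhaust an interval. The type `V` may contain vertices outside `X ∪ Y`, on which `f` is arbitrary;
this allows the components of a graph to be labeled as graphs on the same type. -/
structure IsFlawedSetOrderedGraceful {V : Type*} (G : SimpleGraph V) (X Y : Set V) (n : ℕ)
    (f : V → ℕ) : Prop where
  isBipartiteWith : G.IsBipartiteWith X Y
  injOn : Set.InjOn f (X ∪ Y)
  lt : ∀ v ∈ X ∪ Y, f v < n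
  left_lt_right : ∀ x ∈ X, ∀ y ∈ Y, f x < f y
  injOn_edgeLabel : Set.InjOn (edgeLabel f) G.edgeSet

namespace IsFlawedSetOrderedGraceful

variable {V ι : Type*} {G G' : SimpleGraph V} {X Y X' Y' : Set V}
  {k n n' : ℕ} {f f' : V → ℕ}

theorem edgeLabel_lt (hf : IsFlawedSetOrderedGraceful G X Y n f) {e : Sym2 V}
    (he : e ∈ G.edgeSet) : edgeLabel f e < n := by
  obtain ⟨x, hx, y, hy, rfl⟩ := exists_eq_mk_of_isBipartiteWith hf.isBipartiteWith he
  rw [edgeLabel_mk_of_le (hf.left_lt_right x hx y hy).le]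
  exact (Nat.sub_le _ _).trans_lt (hf.lt y (.inr hy))

theorem exists_threshold (hf : IsFlawedSetOrderedGraceful G X Y n f) :
    ∃ k ≤ n, (∀ x ∈ X, f x < k) ∧ ∀ y ∈ Y, k ≤ f y := by
  have hle : ∀ a ∈ insert 0 ((fun x => f x + 1) '' X), ∀ b ∈ insert n (f '' Y), a ≤ b := by
    rintro _ (rfl | ⟨x, hx, rfl⟩) _ (rfl | ⟨y, hy, rfl⟩)
    · exact Nat.zero_le _
    · exact Nat.zero_le _
    · exact hf.lt x (.inl hx)
    · exact hf.left_lt_right x hx y hy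
  obtain ⟨k, hk, hk'⟩ :=
    exists_between_of_forall_le (Set.insert_nonempty _ _) (Set.insert_nonempty _ _) hle
  exact ⟨k, hk' (.inl rfl), fun x hx => hk (.inr ⟨x, hx, rfl⟩), fun y hy => hk' (.inr ⟨y, hy, rfl⟩)⟩

protected theorem bot : IsFlawedSetOrderedGraceful (⊥ : SimpleGraph V) ∅ ∅ 0 f where
  isBipartiteWith := ⟨disjoint_bot_left, fun _ _ h => h.elim⟩
  injOn := by simp
  lt := by simp
  left_lt_right := by simp
  injOn_edgeLabel := by simp

theorem insertLabeling_left_lt_right (hf : IsFlawedSetOrderedGraceful G X Y n f)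
    (hf' : IsFlawedSetOrderedGraceful G' X' Y' n' f') (hdisj : Disjoint (X ∪ Y) (X' ∪ Y'))
    (hXk : ∀ x ∈ X, f x < k) (hkY : ∀ y ∈ Y, k ≤ f y) :
    ∀ x ∈ X ∪ X', ∀ y ∈ Y ∪ Y',
      insertLabeling (X' ∪ Y') k n' f f' x < insertLabeling (X' ∪ Y') k n' f f' y := by
  rintro x (hx | hx) y (hy | hy)
  · rw [insertLabeling_of_notMem (hdisj.notMem_of_mem_left (.inl hx)),
      insertLabeling_of_notMem (hdisj.notMem_of_mem_left (.inr hy))]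
    exact openGap_strictMono (hf.left_lt_right x hx y hy)
  · rw [insertLabeling_of_notMem (hdisj.notMem_of_mem_left (.inl hx)),
      insertLabeling_of_mem (.inr hy), openGap_of_lt (hXk x hx)]
    exact Nat.lt_add_right _ (hXk x hx)
  · rw [insertLabeling_of_mem (.inl hx),
      insertLabeling_of_notMem (hdisj.notMem_of_mem_left (.inr hy)), openGap_of_le (hkY y hy)]
    exact add_lt_add_of_le_of_lt (hkY y hy) (hf'.lt x (.inl hx))
  · rw [insertLabeling_of_mem (.inl hx), insertLabeling_of_mem (.inr hy)]
    exact Nat.add_lt_add_left (hf'.left_lt_right x hx y hy) k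

theorem injOn_edgeLabel_insertLabeling (hf : IsFlawedSetOrderedGraceful G X Y n f)
    (hf' : IsFlawedSetOrderedGraceful G' X' Y' n' f') (hdisj : Disjoint (X ∪ Y) (X' ∪ Y'))
    (hXk : ∀ x ∈ X, f x < k) (hkY : ∀ y ∈ Y, k ≤ f y) :
    Set.InjOn (edgeLabel (insertLabeling (X' ∪ Y') k n' f f')) (G ⊔ G').edgeSet := by
  have hG : ∀ e ∈ G.edgeSet,
      edgeLabel (insertLabeling (X' ∪ Y') k n' f f') e = edgeLabel f e + n' := fun e he => by
    obtain ⟨x, hx, y, hy, rfl⟩ := exists_eq_mk_of_isBipartiteWith hf.isBipartiteWith he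
    exact edgeLabel_insertLabeling_of_notMem (hdisj.notMem_of_mem_left (.inl hx))
      (hdisj.notMem_of_mem_left (.inr hy)) (hXk x hx) (hkY y hy)
  have hG' : ∀ e ∈ G'.edgeSet,
      edgeLabel (insertLabeling (X' ∪ Y') k n' f f') e = edgeLabel f' e := fun e he => by
    obtain ⟨x, hx, y, hy, rfl⟩ := exists_eq_mk_of_isBipartiteWith hf'.isBipartiteWith he
    exact edgeLabel_insertLabeling_of_mem (.inl hx) (.inr hy)
  rw [SimpleGraph.edgeSet_sup]
  rintro e (he | he) e' (he' | he') h
  · rw [hG e he, hG e' he'] at h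
    exact hf.injOn_edgeLabel he he' (Nat.add_right_cancel h)
  · rw [hG e he, hG' e' he'] at h
    exact absurd (hf'.edgeLabel_lt he') (by omega)
  · rw [hG' e he, hG e' he'] at h
    exact absurd (hf'.edgeLabel_lt he) (by omega)
  · rw [hG' e he, hG' e' he'] at h
    exact hf'.injOn_edgeLabel he he' h

theorem exists_sup (hf : IsFlawedSetOrderedGraceful G X Y n f)
    (hf' : IsFlawedSetOrderedGraceful G' X' Y' n' f') (hdisj : Disjoint (X ∪ Y) (X' ∪ Y')) :
    ∃ g, IsFlawedSetOrderedGraceful (G ⊔ G') (X ∪ X') (Y ∪ Y') (n + n') g := by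
  obtain ⟨k, hkn, hXk, hkY⟩ := hf.exists_threshold
  have hlt := hf.insertLabeling_left_lt_right hf' hdisj hXk hkY
  refine ⟨insertLabeling (X' ∪ Y') k n' f f', ⟨?_, ?_⟩, ?_, ?_, hlt,
    hf.injOn_edgeLabel_insertLabeling hf' hdisj hXk hkY⟩
  · exact Set.disjoint_left.mpr fun v hvX hvY => (hlt v hvX v hvY).false
  · rintro u v (h | h)
    · exact (hf.isBipartiteWith.mem_of_adj h).imp (.imp .inl .inl) (.imp .inl .inl)
    · exact (hf'.isBipartiteWith.mem_of_adj h).imp (.imp .inr .inr) (.imp .inr .inr)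
  · rw [Set.union_union_union_comm]
    exact injOn_insertLabeling hdisj hf.injOn hf'.injOn hf'.lt
  · rw [Set.union_union_union_comm]
    rintro v (hv | hv)
    · rw [insertLabeling_of_notMem (hdisj.notMem_of_mem_left hv)]
      exact openGap_le_add.trans_lt (Nat.add_lt_add_right (hf.lt v hv) n')
    · rw [insertLabeling_of_mem hv]
      exact add_lt_add_of_le_of_lt hkn (hf'.lt v hv)

theorem exists_biSup {H : ι → SimpleGraph V} {X Y : ι → Set V} {n : ι → ℕ} {f : ι → V → ℕ}
    (s : Finset ι) (hdisj : (s : Set ι).PairwiseDisjoint fun i => X i ∪ Y i)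
    (hf : ∀ i ∈ s, IsFlawedSetOrderedGraceful (H i) (X i) (Y i) (n i) (f i)) :
    ∃ g, IsFlawedSetOrderedGraceful (⨆ i ∈ s, H i) (⋃ i ∈ s, X i) (⋃ i ∈ s, Y i)
      (∑ i ∈ s, n i) g := by
  classical
  induction s using Finset.induction_on with
  | empty => exact ⟨0, by simpa using IsFlawedSetOrderedGraceful.bot⟩
  | insert i s hi ih =>
    rw [Finset.coe_insert, Set.pairwiseDisjoint_insert_of_notMem (by simpa using hi)] at hdisj
    obtain ⟨g, hg⟩ := ih hdisj.1 fun j hj => hf j (Finset.mem_insert_of_mem hj)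
    have hdisj' : Disjoint (X i ∪ Y i) ((⋃ j ∈ s, X j) ∪ ⋃ j ∈ s, Y j) := by
      simp only [← Set.iUnion_union_distrib, Set.disjoint_iUnion_right]
      exact hdisj.2
    simpa only [Finset.iSup_insert, Finset.set_biUnion_insert, Finset.sum_insert hi] using
      (hf i (Finset.mem_insert_self i s)).exists_sup hg hdisj'

theorem of_isTree_induce {P : Set V} [Finite P] (hT : (G.induce P).IsTree) (hXY : X ∪ Y = P)
    (hbip : ∀ ⦃u v : V⦄, G.Adj u v → u ∈ P → v ∈ P → (u ∈ X ∧ v ∈ Y) ∨ (u ∈ Y ∧ v ∈ X))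
    (hinj : Set.InjOn f P) (hbound : ∀ v ∈ P, f v ≤ Nat.card P - 1)
    (horder : ∀ x ∈ X, ∀ y ∈ Y, f x < f y)
    (hlabels : {c | ∃ u ∈ P, ∃ v ∈ P, G.Adj u v ∧ Nat.dist (f u) (f v) = c}
      = Set.Icc 1 (Nat.card P - 1)) :
    IsFlawedSetOrderedGraceful (G.induce P).spanningCoe X Y (Nat.card P) f where
  isBipartiteWith :=
    ⟨Set.disjoint_left.mpr fun v hX hY => (horder v hX v hY).false, by
      rintro _ _ ⟨-, u, v, huv, rfl, rfl⟩
      exact hbip huv u.2 v.2⟩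
  injOn := hXY ▸ hinj
  lt v hv := by
    have hvP : v ∈ P := hXY ▸ hv
    have : Nonempty P := ⟨⟨v, hvP⟩⟩
    exact (hbound v hvP).trans_lt (Nat.sub_one_lt Nat.card_pos.ne')
  left_lt_right := horder
  injOn_edgeLabel := injOn_edgeLabel_spanningCoe.mpr <| injOn_edgeLabel_of_isTree hT <| by
    rw [← hlabels]
    ext c
    constructor
    · rintro ⟨⟨u, v⟩, huv, rfl⟩
      exact ⟨u, u.2, v, v.2, huv, rfl⟩
    · rintro ⟨u, hu, v, hv, huv, rfl⟩
      exact ⟨s(⟨u, hu⟩, ⟨v, hv⟩), huv, rfl⟩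

end IsFlawedSetOrderedGraceful

theorem iSup_spanningCoe_induce {V ι : Type*} {G : SimpleGraph V} {P : ι → Set V}
    (hcov : ∀ v, ∃ i, v ∈ P i) (hclosed : ∀ ⦃u v⦄, G.Adj u v → ∀ i, u ∈ P i → v ∈ P i) :
    ⨆ i, (G.induce (P i)).spanningCoe = G := by
  refine le_antisymm (iSup_le fun i => G.spanningCoe_induce_le _) fun u v huv => ?_
  obtain ⟨i, hu⟩ := hcov u
  exact SimpleGraph.iSup_adj.mpr ⟨i, by simp [huv, hu, hclosed huv i hu]⟩

theorem sum_natCard_eq_card_of_existsUnique_mem {V ι : Type*} [Finite V] [Fintype ι]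
    {P : ι → Set V} (hP : ∀ v, ∃! i, v ∈ P i) : ∑ i, Nat.card (P i) = Nat.card V :=
  Nat.card_sigma.symm.trans (Nat.card_congr (Set.sigmaEquiv P hP))

theorem forest_flawed_set_ordered_graceful_labeling_general {V ι : Type*} [Fintype ι]
    {H : ι → SimpleGraph V} {X Y : ι → Set V} {n : ι → ℕ} {f : ι → V → ℕ}
    (hdisj : Pairwise (Function.onFun Disjoint fun i => X i ∪ Y i))
    (hf : ∀ i, IsFlawedSetOrderedGraceful (H i) (X i) (Y i) (n i) (f i)) :
    ∃ g, IsFlawedSetOrderedGraceful (⨆ i, H i) (⋃ i, X i) (⋃ i, Y i) (∑ i, n i) g := by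
  simpa using IsFlawedSetOrderedGraceful.exists_biSup Finset.univ (hdisj.set_pairwise _)
    fun i _ => hf i

/-- A forest whose components are trees (each with at least one edge) that
all admit set-ordered graceful labelings admits a flawed set-ordered graceful labeling. -/
theorem forest_flawed_set_ordered_graceful_labeling
    {V : Type} [Fintype V] [DecidableEq V]
    (G : SimpleGraph V) (m : ℕ) (hm : 1 ≤ m)
    (P X Y : Fin m → Set V) (f : Fin m → V → ℕ)
    -- the `P i` partition the vertex set, and there is no edge between different parts,
    -- so the `P i` are the vertex sets of the connected components `T_i`
    (hPart : ∀ v : V, ∃! i : Fin m, v ∈ P i)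
    (hNoCross : ∀ ⦃u v : V⦄, G.Adj u v → ∀ i : Fin m, u ∈ P i → v ∈ P i)
    -- each component is a tree with at least one edge
    (hTree : ∀ i : Fin m, (G.induce (P i)).IsTree)
    (hEdge : ∀ i : Fin m, ∃ u v : V, u ∈ P i ∧ v ∈ P i ∧ G.Adj u v)
    -- `(X i, Y i)` is a vertex bipartition of the component `T_i`
    (hXY : ∀ i : Fin m, X i ∪ Y i = P i)
    (hDisj : ∀ i : Fin m, Disjoint (X i) (Y i))
    (hBip : ∀ i : Fin m, ∀ ⦃u v : V⦄, G.Adj u v → u ∈ P i → v ∈ P i →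
      (u ∈ X i ∧ v ∈ Y i) ∨ (u ∈ Y i ∧ v ∈ X i))
    -- `f i` is a set-ordered graceful labeling of the component `T_i`,
    -- which has `Nat.card (P i) - 1` edges
    (hInj : ∀ i : Fin m, Set.InjOn (f i) (P i))
    (hBound : ∀ i : Fin m, ∀ v ∈ P i, f i v ≤ Nat.card (P i) - 1)
    (hOrder : ∀ i : Fin m, ∀ x ∈ X i, ∀ y ∈ Y i, f i x < f i y)
    (hLabels : ∀ i : Fin m,
      {c : ℕ | ∃ u ∈ P i, ∃ v ∈ P i, G.Adj u v ∧ Nat.dist (f i u) (f i v) = c}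
        = Set.Icc 1 (Nat.card (P i) - 1)) :
    -- conclusion: a flawed set-ordered graceful labeling of `G`
    ∃ g : V → ℕ,
      Function.Injective g ∧
      (∀ v : V, g v < Fintype.card V) ∧
      (∀ x y : V, (∃ i : Fin m, x ∈ X i) → (∃ i : Fin m, y ∈ Y i) → g x < g y) ∧
      (∀ ⦃u v u' v' : V⦄, G.Adj u v → G.Adj u' v' → s(u, v) ≠ s(u', v') →
        Nat.dist (g u) (g v) ≠ Nat.dist (g u') (g v')) ∧
      (∀ ⦃u v : V⦄, G.Adj u v →
        1 ≤ Nat.dist (g u) (g v) ∧ Nat.dist (g u) (g v) ≤ Fintype.card V - 1) := by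
  have hdisj : Pairwise (Function.onFun Disjoint fun i => X i ∪ Y i) := fun i j hij =>
    Set.disjoint_left.mpr fun v hi hj => hij <| (hPart v).unique (hXY i ▸ hi) (hXY j ▸ hj)
  have hcomp := fun i => IsFlawedSetOrderedGraceful.of_isTree_induce (hTree i) (hXY i) (hBip i)
    (hInj i) (hBound i) (hOrder i) (hLabels i)
  obtain ⟨g, hg⟩ := forest_flawed_set_ordered_graceful_labeling_general hdisj hcomp
  rw [iSup_spanningCoe_induce (fun v => (hPart v).exists) hNoCross,
    sum_natCard_eq_card_of_existsUnique_mem hPart, Nat.card_eq_fintype_card] at hg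
  have hmem : ∀ v, v ∈ (⋃ i, X i) ∪ ⋃ i, Y i := fun v => by
    obtain ⟨i, hi⟩ := (hPart v).exists
    rw [← Set.iUnion_union_distrib]
    exact Set.mem_iUnion_of_mem i (hXY i ▸ hi)
  have hginj : Function.Injective g := fun u v => hg.injOn (hmem u) (hmem v)
  refine ⟨g, hginj, fun v => hg.lt v (hmem v), ?_, ?_, ?_⟩
  · exact fun x y hx hy => hg.left_lt_right x (Set.mem_iUnion.mpr hx) y (Set.mem_iUnion.mpr hy)
  · exact fun u v u' v' h h' hne => hg.injOn_edgeLabel.ne h h' hne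
  · exact fun u v h => ⟨Nat.dist_pos_of_ne (hginj.ne h.ne),
      Nat.le_sub_one_of_lt (hg.edgeLabel_lt (e := s(u, v)) h)⟩
end

section
/- Let k ≥ 1 and d ≥ 1 be integers and let G be a connected bipartite graph with q ≥ 1 edges admitting a graceful (k,d)-total coloring. Let G′ be any graph obtained from G by attaching finitely many new pendant vertices, each new vertex being joined by exactly one new edge to some vertex of G (different new vertices may be attached to the same or to different vertices of G, and the attachment is arbitrary). Then G′ is again a connected bipartite graph and admits a graceful (k,d)-total coloring. -/
/-!
Adding a constant multiple of `d` to all vertex colors changes no edge color, so the colors on `Y`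
may be assumed to be as large as we like. With `q` edges in `G` and `n` new leaves, the pendant
edges get the colors `c = k + (q + i)d` for `i < n`: a leaf at `x ∈ X` is colored `f x + c` and
belongs to the `Y`-side, while a leaf at `y ∈ Y` is colored `f y - c`, a multiple of `d`, and
belongs to the `X`-side.
-/

section EdgeDiff

variable {V W : Type*}

/-- The edge coloring `uv ↦ |f u - f v|` induced by a vertex coloring `f`, defined on all unordered
pairs. -/
def edgeDiff (f : V → ℕ) : Sym2 V → ℕ :=
  Sym2.lift ⟨fun u v => Nat.dist (f u) (f v), fun _ _ => Nat.dist_comm _ _⟩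

theorem edgeDiff_add_const (f : V → ℕ) (c : ℕ) : edgeDiff (fun v => f v + c) = edgeDiff f := by
  ext ⟨u, v⟩
  exact Nat.dist_add_add_right _ _ _

theorem edgeDiff_map (f : W → ℕ) (φ : V → W) (e : Sym2 V) :
    edgeDiff f (e.map φ) = edgeDiff (f ∘ φ) e := by
  induction e with
  | _ u v => rfl

end EdgeDiff

theorem edgeColorSet_eq_image {V : Type} (G : SimpleGraph V) (f : Sym2 V → ℕ) :
    EdgeColorSet G f = f '' G.edgeSet := by
  ext c
  constructor
  · rintro ⟨u, v, huv, rfl⟩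
    exact ⟨s(u, v), huv, rfl⟩
  · rintro ⟨⟨u, v⟩, huv, rfl⟩
    exact ⟨u, v, huv, rfl⟩

theorem arithProgSet_add (k d q n : ℕ) :
    ArithProgSet k d (q + n) =
      ArithProgSet k d q ∪ Set.range (fun i : Fin n => k + (q + i) * d) := by
  ext c
  constructor
  · rintro ⟨j, hj, rfl⟩
    rcases lt_or_ge j q with hjq | hqj
    · exact Or.inl ⟨j, hjq, rfl⟩
    · obtain ⟨i, rfl⟩ := Nat.exists_eq_add_of_le hqj
      exact Or.inr ⟨⟨i, by omega⟩, rfl⟩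
  · rintro (⟨j, hj, rfl⟩ | ⟨i, rfl⟩)
    · exact ⟨j, by omega, rfl⟩
    · exact ⟨q + i, by omega, rfl⟩

section AddLeaves

variable {V L : Type*} (G : SimpleGraph V) (a : L → V)

/-- The edge joining the new leaf `l` to the vertex `a l`. -/
def pendantEdge (l : L) : Sym2 (V ⊕ L) := s(Sum.inl (a l), Sum.inr l)

/-- The graph obtained from `G` by attaching, for every `l : L`, a new leaf to the vertex `a l`. -/
def addLeaves : SimpleGraph (V ⊕ L) :=
  G.map Function.Embedding.inl ⊔ SimpleGraph.fromEdgeSet (Set.range (pendantEdge a))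

theorem pendantEdge_injective : Function.Injective (pendantEdge a) := by
  intro l m hlm
  simp only [pendantEdge, Sym2.eq_iff, Sum.inl.injEq, Sum.inr.injEq, reduceCtorEq, and_self,
    or_false] at hlm
  exact hlm.2

theorem edgeSet_addLeaves :
    (addLeaves G a).edgeSet = Sym2.map Sum.inl '' G.edgeSet ∪ Set.range (pendantEdge a) := by
  have disjoint_diag : Disjoint (Set.range (pendantEdge a)) Sym2.diagSet := by
    rw [Set.disjoint_left]
    rintro _ ⟨l, rfl⟩
    simp [pendantEdge]
  rw [addLeaves, SimpleGraph.edgeSet_sup, SimpleGraph.edgeSet_map,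
    SimpleGraph.edgeSet_fromEdgeSet, disjoint_diag.sdiff_eq_left]
  rfl

@[simp]
theorem addLeaves_adj_inl_inl {u v : V} :
    (addLeaves G a).Adj (Sum.inl u) (Sum.inl v) ↔ G.Adj u v := by
  simp [addLeaves, pendantEdge]

@[simp]
theorem addLeaves_adj_inl_inr {u : V} {l : L} :
    (addLeaves G a).Adj (Sum.inl u) (Sum.inr l) ↔ a l = u := by
  simp [addLeaves, pendantEdge]

@[simp]
theorem addLeaves_adj_inr_inl {u : V} {l : L} :
    (addLeaves G a).Adj (Sum.inr l) (Sum.inl u) ↔ a l = u := by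
  rw [SimpleGraph.adj_comm, addLeaves_adj_inl_inr]

@[simp]
theorem not_addLeaves_adj_inr_inr {l m : L} :
    ¬(addLeaves G a).Adj (Sum.inr l) (Sum.inr m) := by
  simp [addLeaves, pendantEdge]

theorem card_edgeSet_addLeaves [Finite G.edgeSet] [Finite L] :
    Nat.card (addLeaves G a).edgeSet = Nat.card G.edgeSet + Nat.card L := by
  have disj : Disjoint (Sym2.map Sum.inl '' G.edgeSet) (Set.range (pendantEdge a)) := by
    rw [Set.disjoint_left]
    rintro _ ⟨⟨u, v⟩, -, rfl⟩ ⟨l, hl⟩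
    simp [pendantEdge] at hl
  rw [edgeSet_addLeaves, Nat.card_coe_set_eq,
    Set.ncard_union_eq disj (Set.toFinite _) (Set.toFinite _),
    Set.ncard_image_of_injective _ (Sym2.map.injective Sum.inl_injective),
    Set.ncard_range_of_injective (pendantEdge_injective a), Nat.card_coe_set_eq]

variable {G} in
theorem connected_addLeaves (hG : G.Connected) : (addLeaves G a).Connected := by
  let inlHom : G →g addLeaves G a := ⟨Sum.inl, (addLeaves_adj_inl_inl G a).2⟩
  obtain ⟨v₀⟩ := hG.nonempty
  have reachable_inl (v : V) : (addLeaves G a).Reachable (Sum.inl v₀) (Sum.inl v) :=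
    (hG.preconnected v₀ v).map inlHom
  refine (SimpleGraph.connected_iff_exists_forall_reachable _).2 ⟨Sum.inl v₀, ?_⟩
  rintro (v | l)
  · exact reachable_inl v
  · exact (reachable_inl (a l)).trans ((addLeaves_adj_inl_inr G a).2 rfl).reachable

/-- The side of `addLeaves G a` that extends the side `X` of a bipartition `(X, Y)` of `G`: it
contains the leaves attached to vertices of the other side `Y`. -/
def addLeavesSide (X Y : Set V) : Set (V ⊕ L) := Sum.inl '' X ∪ Sum.inr '' (a ⁻¹' Y)

end AddLeaves

theorem IsBipartitionOf.addLeaves {V L : Type} {G : SimpleGraph V} {X Y : Set V}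
    (hbip : IsBipartitionOf G X Y) (a : L → V) :
    IsBipartitionOf (addLeaves G a) (addLeavesSide a X Y) (addLeavesSide a Y X) := by
  obtain ⟨cover, disj, adj⟩ := hbip
  rw [Set.disjoint_left] at disj
  refine ⟨?_, Set.disjoint_left.2 ?_, ?_⟩
  · rintro (v | l)
    · simpa [addLeavesSide] using cover v
    · simpa [addLeavesSide] using (cover (a l)).symm
  · rintro _ (⟨v, hX, rfl⟩ | ⟨l, hY, rfl⟩)
    · simpa [addLeavesSide] using disj hX
    · simpa [addLeavesSide] using fun hX => disj hX hY
  · rintro (u | l) (v | m) huv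
    · simpa [addLeavesSide] using adj ((addLeaves_adj_inl_inl G a).1 huv)
    · obtain rfl := (addLeaves_adj_inl_inr G a).1 huv
      simpa [addLeavesSide] using cover (a m)
    · obtain rfl := (addLeaves_adj_inr_inl G a).1 huv
      simpa [addLeavesSide] using (cover (a l)).symm
    · exact absurd huv (not_addLeaves_adj_inr_inr G a)

section VertexColoring

variable {V L : Type} {G : SimpleGraph V} {X Y : Set V} {k d q : ℕ} {f : V → ℕ}

/-- The vertex part of a graceful `(k,d)`-total coloring, which determines the colors
`|f u - f v|` of the edges. -/
structure IsGracefulKDVertexColoring (G : SimpleGraph V) (X Y : Set V) (k d q : ℕ)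
    (f : V → ℕ) : Prop where
  dvd : ∀ x ∈ X, d ∣ f x
  exists_eq : ∀ y ∈ Y, ∃ j, f y = k + j * d
  image_edgeDiff : edgeDiff f '' G.edgeSet = ArithProgSet k d q

theorem GracefulKDTotalColoring.isGracefulKDVertexColoring {g : Sym2 V → ℕ}
    (h : GracefulKDTotalColoring G X Y k d q f g) : IsGracefulKDVertexColoring G X Y k d q f := by
  obtain ⟨⟨dvd, exists_eq, -⟩, eq_dist, colors⟩ := h
  have eqOn : Set.EqOn (edgeDiff f) g G.edgeSet := by
    rintro ⟨u, v⟩ huv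
    exact (eq_dist huv).symm
  exact ⟨dvd, exists_eq, by rw [eqOn.image_eq, ← edgeColorSet_eq_image, colors]⟩

namespace IsGracefulKDVertexColoring

theorem gracefulKDTotalColoring (h : IsGracefulKDVertexColoring G X Y k d q f) :
    GracefulKDTotalColoring G X Y k d q f (edgeDiff f) := by
  refine ⟨⟨h.dvd, h.exists_eq, fun u v huv => ?_⟩, fun _ _ _ => rfl, ?_⟩
  · obtain ⟨j, -, hj⟩ := h.image_edgeDiff.subset ⟨s(u, v), huv, rfl⟩
    exact ⟨j, hj⟩
  · rw [edgeColorSet_eq_image, h.image_edgeDiff]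

theorem add_mul (h : IsGracefulKDVertexColoring G X Y k d q f) (N : ℕ) :
    IsGracefulKDVertexColoring G X Y k d q (fun v => f v + N * d) where
  dvd x hx := dvd_add (h.dvd x hx) (dvd_mul_left d N)
  exists_eq y hy := by
    obtain ⟨j, hj⟩ := h.exists_eq y hy
    exact ⟨j + N, by rw [hj]; ring⟩
  image_edgeDiff := by rw [edgeDiff_add_const, h.image_edgeDiff]

end IsGracefulKDVertexColoring

/-- Here `m` is the color of a leaf attached to `v` by an edge of color `k + i * d`; the leaf lies
on the side opposite to `v`. -/
theorem IsBipartitionOf.exists_leafColor (hbip : IsBipartitionOf G X Y)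
    (hX : ∀ x ∈ X, d ∣ f x) {i : ℕ} (hY : ∀ y ∈ Y, ∃ j, i ≤ j ∧ f y = k + j * d) (v : V) :
    ∃ m, Nat.dist (f v) m = k + i * d ∧ (v ∈ Y → d ∣ m) ∧ (v ∈ X → ∃ j, m = k + j * d) := by
  obtain ⟨cover, disj, -⟩ := hbip
  rw [Set.disjoint_left] at disj
  rcases cover v with hv | hv
  · obtain ⟨j, hj⟩ := hX v hv
    refine ⟨f v + (k + i * d), ?_, fun hvY => absurd hvY (disj hv), fun _ => ⟨j + i, ?_⟩⟩
    · rw [Nat.dist_eq_sub_of_le (Nat.le_add_right _ _), Nat.add_sub_cancel_left]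
    · rw [hj]; ring
  · obtain ⟨j, hij, hj⟩ := hY v hv
    obtain ⟨t, rfl⟩ := Nat.exists_eq_add_of_le hij
    refine ⟨t * d, ?_, fun _ => dvd_mul_left d t, fun hvX => absurd hv (disj hvX)⟩
    have split : f v = (k + i * d) + t * d := by rw [hj]; ring
    rw [split, Nat.dist_eq_sub_of_le_right (Nat.le_add_left _ _), Nat.add_sub_cancel]

namespace IsGracefulKDVertexColoring

theorem exists_sumElim [Finite L] (h : IsGracefulKDVertexColoring G X Y k d q f)
    (hbip : IsBipartitionOf G X Y) (hY : ∀ y ∈ Y, ∃ j, q + Nat.card L ≤ j ∧ f y = k + j * d)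
    (a : L → V) :
    ∃ g : L → ℕ, IsGracefulKDVertexColoring (addLeaves G a) (addLeavesSide a X Y)
      (addLeavesSide a Y X) k d (q + Nat.card L) (Sum.elim f g) := by
  let num : L ≃ Fin (Nat.card L) := Finite.equivFin L
  have exists_color (l : L) : ∃ m, Nat.dist (f (a l)) m = k + (q + num l) * d ∧
      (a l ∈ Y → d ∣ m) ∧ (a l ∈ X → ∃ j, m = k + j * d) := by
    refine hbip.exists_leafColor h.dvd (fun y hy => ?_) (a l)
    obtain ⟨j, hj, hfy⟩ := hY y hy
    exact ⟨j, by omega, hfy⟩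
  choose g hdist hdvd hexists using exists_color
  refine ⟨g, ?_, ?_, ?_⟩
  · rintro _ (⟨x, hx, rfl⟩ | ⟨l, hl, rfl⟩)
    · exact h.dvd x hx
    · exact hdvd l hl
  · rintro _ (⟨y, hy, rfl⟩ | ⟨l, hl, rfl⟩)
    · exact h.exists_eq y hy
    · exact hexists l hl
  · have pendant_colors : edgeDiff (Sum.elim f g) ∘ pendantEdge a =
        (fun i : Fin (Nat.card L) => k + (q + i) * d) ∘ num :=
      funext hdist
    rw [edgeSet_addLeaves, Set.image_union, Set.image_image, ← Set.range_comp, pendant_colors,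
      num.surjective.range_comp, arithProgSet_add, ← h.image_edgeDiff]
    simp only [edgeDiff_map, Sum.elim_comp_inl]

theorem exists_addLeaves [Finite L] (h : IsGracefulKDVertexColoring G X Y k d q f)
    (hbip : IsBipartitionOf G X Y) (a : L → V) :
    ∃ f' : V ⊕ L → ℕ, IsGracefulKDVertexColoring (addLeaves G a) (addLeavesSide a X Y)
      (addLeavesSide a Y X) k d (q + Nat.card L) f' := by
  have large_on_Y : ∀ y ∈ Y, ∃ j, q + Nat.card L ≤ j ∧
      f y + (q + Nat.card L) * d = k + j * d := by
    intro y hy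
    obtain ⟨j, hj⟩ := h.exists_eq y hy
    exact ⟨j + (q + Nat.card L), Nat.le_add_left _ _, by rw [hj]; ring⟩
  obtain ⟨g, hg⟩ := (h.add_mul (q + Nat.card L)).exists_sumElim hbip large_on_Y a
  exact ⟨_, hg⟩

end IsGracefulKDVertexColoring

end VertexColoring

/-- Attaching finitely many pendant vertices (leaves) to a connected
bipartite graph admitting a graceful `(k,d)`-total coloring yields a connected bipartite
graph admitting a graceful `(k,d)`-total coloring. -/
theorem addLeaves_graceful_kd_total_coloring
    {V L : Type} [Fintype V] [DecidableEq V] [Fintype L] [DecidableEq L]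
    (G : SimpleGraph V) (X Y : Set V) (k d : ℕ) (hk : 1 ≤ k) (hd : 1 ≤ d)
    (hconn : G.Connected) (hbip : IsBipartitionOf G X Y)
    (hq : 1 ≤ Nat.card G.edgeSet)
    (fV : V → ℕ) (fE : Sym2 V → ℕ)
    (hf : GracefulKDTotalColoring G X Y k d (Nat.card G.edgeSet) fV fE)
    -- `G'` is obtained from `G` by attaching, for each `l : L`, a new pendant vertex
    -- joined by one new edge to the vertex `a l` of `G`
    (a : L → V) (G' : SimpleGraph (V ⊕ L))
    (hG' : ∀ x y : V ⊕ L, G'.Adj x y ↔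
      ((∃ u v : V, x = Sum.inl u ∧ y = Sum.inl v ∧ G.Adj u v) ∨
       (∃ (u : V) (l : L), x = Sum.inl u ∧ y = Sum.inr l ∧ a l = u) ∨
       (∃ (u : V) (l : L), x = Sum.inr l ∧ y = Sum.inl u ∧ a l = u))) :
    G'.Connected ∧
      ∃ (X' Y' : Set (V ⊕ L)) (fV' : V ⊕ L → ℕ) (fE' : Sym2 (V ⊕ L) → ℕ),
        IsBipartitionOf G' X' Y' ∧
        GracefulKDTotalColoring G' X' Y' k d (Nat.card G'.edgeSet) fV' fE' := by
  obtain rfl : G' = addLeaves G a := by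
    ext x y
    rcases x with u | l <;> rcases y with v | m <;> simp [hG', eq_comm]
  obtain ⟨f', hf'⟩ := hf.isGracefulKDVertexColoring.exists_addLeaves hbip a
  rw [card_edgeSet_addLeaves]
  exact ⟨connected_addLeaves a hconn, _, _, f', edgeDiff f', hbip.addLeaves a,
    hf'.gracefulKDTotalColoring⟩
end

section
/- Let k ≥ 1 and d ≥ 1 be integers. If a connected graph G (necessarily bipartite, with q ≥ 1 edges) admits a set-ordered graceful labeling, then G admits a graceful-difference (k,d)-total coloring and an odd-edge graceful-difference (k,d)-total coloring. -/
/-! If `f` increases from `X` to `Y` along every edge, then `|f(x) - f(y)| = f(y) - f(x)`, so the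
recoloring `x ↦ m f(x) d`, `y ↦ k + m f(y) d` turns an edge with label `l = |f(x) - f(y)|` into one
whose end colors differ by `k + mld`. Coloring that edge `k + (ml - 1)d` leaves the constant
difference `d`. As `l` runs through `1, …, q`, these edge colors run through the progression
`k + jd` for `m = 1` and through its odd terms for `m = 2`. -/

section Colors

variable {V : Type*}

/-- The edge labeling `uv ↦ |f(u) - f(v)|` induced by a vertex labeling `f`. -/
def inducedEdgeLabel (f : V → ℕ) : Sym2 V → ℕ :=
  Sym2.lift ⟨fun u v => Nat.dist (f u) (f v), fun _ _ => Nat.dist_comm _ _⟩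

@[simp]
theorem inducedEdgeLabel_mk (f : V → ℕ) (u v : V) :
    inducedEdgeLabel f s(u, v) = Nat.dist (f u) (f v) := rfl

/-- The vertex part of the `(k,d)`-total coloring with multiplier `m` built from `f`:
`v ↦ m f(v) d`, shifted by `k` on `Y`. -/
noncomputable def dilatedVertexColor (Y : Set V) (f : V → ℕ) (k d m : ℕ) (v : V) : ℕ :=
  Y.indicator (fun _ => k) v + m * f v * d

/-- The color `k + (ml - 1)d` of an edge with label `l` in the `(k,d)`-total coloring with
multiplier `m`; the subtraction is truncated, and only `1 ≤ ml` is meaningful. -/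
def dilatedEdgeColor (k d m l : ℕ) : ℕ := k + (m * l - 1) * d

theorem dilatedVertexColor_of_mem {Y : Set V} {y : V} (hy : y ∈ Y) (f : V → ℕ) (k d m : ℕ) :
    dilatedVertexColor Y f k d m y = k + m * f y * d := by
  rw [dilatedVertexColor, Set.indicator_of_mem hy]

theorem dilatedVertexColor_of_notMem {Y : Set V} {x : V} (hx : x ∉ Y) (f : V → ℕ) (k d m : ℕ) :
    dilatedVertexColor Y f k d m x = m * f x * d := by
  rw [dilatedVertexColor, Set.indicator_of_notMem hx, zero_add]

theorem dilatedEdgeColor_add {m l : ℕ} (hm : 0 < m) (hl : 0 < l) (k d : ℕ) :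
    dilatedEdgeColor k d m l + d = k + m * l * d := by
  rw [dilatedEdgeColor, add_assoc, ← Nat.succ_mul, Nat.succ_eq_add_one,
    Nat.sub_add_cancel (Nat.mul_pos hm hl)]

theorem dist_mul_mul_add_mul_mul {a b : ℕ} (hab : a ≤ b) (k d m : ℕ) :
    Nat.dist (m * a * d) (k + m * b * d) = k + m * Nat.dist a b * d := by
  obtain ⟨t, rfl⟩ := Nat.exists_eq_add_of_le hab
  have hsplit : k + m * (a + t) * d = m * a * d + (k + m * t * d) := by ring
  rw [hsplit, Nat.dist_eq_sub_of_le (Nat.le_add_right _ _), Nat.dist_eq_sub_of_le hab,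
    Nat.add_sub_cancel_left, Nat.add_sub_cancel_left]

theorem dist_dilatedVertexColor_of_lt {Y : Set V} {f : V → ℕ} {x y : V} (hx : x ∉ Y)
    (hy : y ∈ Y) (hxy : f x < f y) {m : ℕ} (hm : 0 < m) (k d : ℕ) :
    Nat.dist (dilatedVertexColor Y f k d m x) (dilatedVertexColor Y f k d m y) =
      dilatedEdgeColor k d m (inducedEdgeLabel f s(x, y)) + d := by
  rw [dilatedVertexColor_of_notMem hx, dilatedVertexColor_of_mem hy,
    dist_mul_mul_add_mul_mul hxy.le, inducedEdgeLabel_mk,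
    dilatedEdgeColor_add hm (Nat.dist_pos_of_ne hxy.ne)]

end Colors

theorem arithProgSet_eq_image (k d q : ℕ) :
    ArithProgSet k d q = dilatedEdgeColor k d 1 '' Set.Icc 1 q := by
  ext c
  constructor
  · rintro ⟨j, hj, rfl⟩
    exact ⟨j + 1, ⟨Nat.le_add_left 1 j, hj⟩, by simp [dilatedEdgeColor]⟩
  · rintro ⟨l, ⟨hl, hlq⟩, rfl⟩
    exact ⟨l - 1, by lia, by simp [dilatedEdgeColor]⟩

theorem oddArithProgSet_eq_image (k d q : ℕ) :
    OddArithProgSet k d q = dilatedEdgeColor k d 2 '' Set.Icc 1 q := by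
  simp only [OddArithProgSet, dilatedEdgeColor, Set.image, Set.mem_Icc, and_assoc, eq_comm]

section Graph

variable {V : Type} {G : SimpleGraph V} {X Y : Set V} {f : V → ℕ} {m q : ℕ}

theorem edgeColorSet_comp (G : SimpleGraph V) (g : ℕ → ℕ) (fE : Sym2 V → ℕ) :
    EdgeColorSet G (g ∘ fE) = g '' EdgeColorSet G fE := by
  ext c
  constructor
  · rintro ⟨u, v, huv, rfl⟩
    exact ⟨_, ⟨u, v, huv, rfl⟩, rfl⟩
  · rintro ⟨_, ⟨u, v, huv, rfl⟩, rfl⟩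
    exact ⟨u, v, huv, rfl⟩

theorem kdTotalVertexCond_dilated (hXY : Disjoint X Y) (G : SimpleGraph V) (f : V → ℕ)
    (k d m : ℕ) :
    KDTotalVertexCond G X Y k d (dilatedVertexColor Y f k d m)
      (dilatedEdgeColor k d m ∘ inducedEdgeLabel f) := by
  refine ⟨fun x hx => ?_, fun y hy => ⟨m * f y, dilatedVertexColor_of_mem hy f k d m⟩,
    fun u v _ => ⟨_, rfl⟩⟩
  rw [dilatedVertexColor_of_notMem (hXY.notMem_of_mem_left hx)]
  exact Nat.dvd_mul_left d (m * f x)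

theorem dist_dilatedVertexColor_of_adj (hbip : IsBipartitionOf G X Y)
    (hlt : ∀ x ∈ X, ∀ y ∈ Y, G.Adj x y → f x < f y) (hm : 0 < m) (k d : ℕ) {u v : V}
    (huv : G.Adj u v) :
    Nat.dist (dilatedVertexColor Y f k d m u) (dilatedVertexColor Y f k d m v) =
      dilatedEdgeColor k d m (inducedEdgeLabel f s(u, v)) + d := by
  obtain ⟨-, hXY, hedge⟩ := hbip
  rcases hedge huv with ⟨hu, hv⟩ | ⟨hu, hv⟩
  · exact dist_dilatedVertexColor_of_lt (hXY.notMem_of_mem_left hu) hv (hlt u hu v hv huv) hm k d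
  · rw [Nat.dist_comm, Sym2.eq_swap]
    exact dist_dilatedVertexColor_of_lt (hXY.notMem_of_mem_left hv) hu
      (hlt v hv u hu huv.symm) hm k d

theorem natAbs_dist_dilatedVertexColor_sub (hbip : IsBipartitionOf G X Y)
    (hlt : ∀ x ∈ X, ∀ y ∈ Y, G.Adj x y → f x < f y) (hm : 0 < m) (k d : ℕ) {u v : V}
    (huv : G.Adj u v) :
    ((Nat.dist (dilatedVertexColor Y f k d m u) (dilatedVertexColor Y f k d m v) : ℤ) -
      ((dilatedEdgeColor k d m ∘ inducedEdgeLabel f) s(u, v) : ℤ)).natAbs = d := by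
  rw [dist_dilatedVertexColor_of_adj hbip hlt hm k d huv, Function.comp_apply, Nat.cast_add,
    add_sub_cancel_left, Int.natAbs_natCast]

theorem gracefulDifferenceKDTotalColoring_dilated (hbip : IsBipartitionOf G X Y)
    (hlt : ∀ x ∈ X, ∀ y ∈ Y, G.Adj x y → f x < f y)
    (hlabels : EdgeColorSet G (inducedEdgeLabel f) = Set.Icc 1 q) (k d : ℕ) :
    GracefulDifferenceKDTotalColoring G X Y k d q (dilatedVertexColor Y f k d 1)
      (dilatedEdgeColor k d 1 ∘ inducedEdgeLabel f) := by
  refine ⟨kdTotalVertexCond_dilated hbip.2.1 G f k d 1,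
    ⟨d, fun _ _ => natAbs_dist_dilatedVertexColor_sub hbip hlt one_pos k d⟩, ?_⟩
  rw [edgeColorSet_comp, hlabels, arithProgSet_eq_image]

theorem oddEdgeGracefulDifferenceKDTotalColoring_dilated (hbip : IsBipartitionOf G X Y)
    (hlt : ∀ x ∈ X, ∀ y ∈ Y, G.Adj x y → f x < f y)
    (hlabels : EdgeColorSet G (inducedEdgeLabel f) = Set.Icc 1 q) (k d : ℕ) :
    OddEdgeGracefulDifferenceKDTotalColoring G X Y k d q (dilatedVertexColor Y f k d 2)
      (dilatedEdgeColor k d 2 ∘ inducedEdgeLabel f) := by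
  refine ⟨kdTotalVertexCond_dilated hbip.2.1 G f k d 2,
    ⟨d, fun _ _ => natAbs_dist_dilatedVertexColor_sub hbip hlt two_pos k d⟩, ?_⟩
  rw [edgeColorSet_comp, hlabels, oddArithProgSet_eq_image]

end Graph

theorem set_ordered_graceful_to_graceful_difference_kd_general
    {V : Type} {G : SimpleGraph V} {X Y : Set V} {f : V → ℕ} {q : ℕ}
    (hbip : IsBipartitionOf G X Y) (hlt : ∀ x ∈ X, ∀ y ∈ Y, G.Adj x y → f x < f y)
    (hlabels : EdgeColorSet G (inducedEdgeLabel f) = Set.Icc 1 q) (k d : ℕ) :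
    (∃ (X' Y' : Set V) (fV : V → ℕ) (fE : Sym2 V → ℕ),
        IsBipartitionOf G X' Y' ∧ GracefulDifferenceKDTotalColoring G X' Y' k d q fV fE) ∧
    (∃ (X' Y' : Set V) (fV : V → ℕ) (fE : Sym2 V → ℕ),
        IsBipartitionOf G X' Y' ∧ OddEdgeGracefulDifferenceKDTotalColoring G X' Y' k d q fV fE) :=
  ⟨⟨X, Y, _, _, hbip, gracefulDifferenceKDTotalColoring_dilated hbip hlt hlabels k d⟩,
    ⟨X, Y, _, _, hbip, oddEdgeGracefulDifferenceKDTotalColoring_dilated hbip hlt hlabels k d⟩⟩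

/-- **STATEMENT.** If a connected (bipartite) graph admits a set-ordered graceful labeling,
then it admits the stated `(k,d)`-total coloring and its odd-edge variant. -/
theorem set_ordered_graceful_to_graceful_difference_kd
    {V : Type} [Fintype V] [DecidableEq V]
    (G : SimpleGraph V) (X Y : Set V) (f : V → ℕ)
    (hconn : G.Connected) (hbip : IsBipartitionOf G X Y)
    (hq : 1 ≤ Nat.card G.edgeSet)
    (hsog : SetOrderedGracefulLabeling G X Y f (Nat.card G.edgeSet))
    (k d : ℕ) (hk : 1 ≤ k) (hd : 1 ≤ d) :
    (∃ (X' Y' : Set V) (fV : V → ℕ) (fE : Sym2 V → ℕ),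
        IsBipartitionOf G X' Y' ∧
        GracefulDifferenceKDTotalColoring G X' Y' k d (Nat.card G.edgeSet) fV fE) ∧
    (∃ (X' Y' : Set V) (fV : V → ℕ) (fE : Sym2 V → ℕ),
        IsBipartitionOf G X' Y' ∧
        OddEdgeGracefulDifferenceKDTotalColoring G X' Y' k d (Nat.card G.edgeSet) fV fE) := by
  obtain ⟨-, -, hlt, hlabels⟩ := hsog
  exact set_ordered_graceful_to_graceful_difference_kd_general hbip
    (fun x hx y hy _ => hlt x hx y hy) hlabels k d
end

section
/- Let k ≥ 1 and d ≥ 1 be integers. If a connected graph G (necessarily bipartite, with q ≥ 1 edges) admits a set-ordered graceful labeling, then G admits an edge-magic (k,d)-total coloring and an odd-edge edge-magic (k,d)-total coloring. -/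
/-!
Write `f` for the graceful labeling and let `m` bound it on `Y`. Color `x ∈ X` with `f x * d`,
color `y ∈ Y` with the reflected label `k + (m - f y) * d`, and color the edge `xy` with
`k + (f y - f x - 1) * d`. The labels telescope along every edge, so the three colors add up to
`2 * k + (m - 1) * d`, and as `f y - f x` runs over `1, …, q` the edge colors run over
`k + j * d`, `j < q`.

The odd-edge variant needs no new construction: `k + (2 * j - 1) * d = (k + d) + (j - 1) * (2 * d)`,
so an edge-magic `(k + d, 2 * d)`-total coloring is an odd-edge edge-magic `(k, d)`-total coloring.
-/

/-- The vertex colors of the edge-magic coloring built from a labeling `f`: scaled labels on `X`,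
and labels reflected at `m` off `X`. It is meant for `f ≤ m` off `X`, where `m - f v` is not
truncated. -/
noncomputable def magicVertexColor {V : Type*} (X : Set V) (f : V → ℕ) (m k d : ℕ) (v : V) : ℕ :=
  open Classical in if v ∈ X then f v * d else k + (m - f v) * d

/-- The edge colors of the edge-magic coloring built from a labeling `f`: the edge label
`l = |f u - f v|` becomes `k + (l - 1) * d`. It is meant for labelings separating adjacent
vertices, where `l - 1` is not truncated. -/
def magicEdgeColor {V : Type*} (f : V → ℕ) (k d : ℕ) : Sym2 V → ℕ :=
  Sym2.lift ⟨fun u v => k + (Nat.dist (f u) (f v) - 1) * d, fun u v => by simp only [Nat.dist_comm]⟩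

section MagicColor

variable {V : Type*} {X : Set V}

theorem magicVertexColor_of_mem {v : V} (hv : v ∈ X) (f : V → ℕ) (m k d : ℕ) :
    magicVertexColor X f m k d v = f v * d :=
  if_pos hv

theorem magicVertexColor_of_notMem {v : V} (hv : v ∉ X) (f : V → ℕ) (m k d : ℕ) :
    magicVertexColor X f m k d v = k + (m - f v) * d :=
  if_neg hv

theorem magicEdgeColor_mk (f : V → ℕ) (k d : ℕ) (u v : V) :
    magicEdgeColor f k d s(u, v) = k + (Nat.dist (f u) (f v) - 1) * d :=
  rfl

theorem magicVertexColor_add_magicEdgeColor_add {f : V → ℕ} {m : ℕ} {x y : V} (hx : x ∈ X)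
    (hy : y ∉ X) (hlt : f x < f y) (hle : f y ≤ m) (k d : ℕ) :
    magicVertexColor X f m k d x + magicEdgeColor f k d s(x, y) + magicVertexColor X f m k d y =
      2 * k + (m - 1) * d := by
  have telescope : m - 1 = f x + (f y - f x - 1) + (m - f y) := by omega
  rw [magicVertexColor_of_mem hx, magicVertexColor_of_notMem hy, magicEdgeColor_mk,
    Nat.dist_eq_sub_of_le hlt.le, telescope]
  ring

end MagicColor

section EdgeMagic

variable {V : Type} {G : SimpleGraph V} {X Y : Set V} {f : V → ℕ}

theorem kdTotalVertexCond_magicColor (hXY : Disjoint X Y) (m k d : ℕ) :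
    KDTotalVertexCond G X Y k d (magicVertexColor X f m k d) (magicEdgeColor f k d) := by
  refine ⟨fun x hx => ?_, fun y hy => ?_, fun u v _ => ⟨_, magicEdgeColor_mk f k d u v⟩⟩
  · rw [magicVertexColor_of_mem hx]
    exact dvd_mul_left d (f x)
  · exact ⟨m - f y, magicVertexColor_of_notMem (hXY.notMem_of_mem_right hy) f m k d⟩

theorem edgeColorSet_magicEdgeColor {q : ℕ}
    (hlabels : {l : ℕ | ∃ u v : V, G.Adj u v ∧ Nat.dist (f u) (f v) = l} = Set.Icc 1 q)
    (k d : ℕ) : EdgeColorSet G (magicEdgeColor f k d) = ArithProgSet k d q := by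
  ext c
  constructor
  · rintro ⟨u, v, huv, rfl⟩
    obtain ⟨one_le, le_q⟩ : Nat.dist (f u) (f v) ∈ Set.Icc 1 q := hlabels ▸ ⟨u, v, huv, rfl⟩
    exact ⟨Nat.dist (f u) (f v) - 1, by omega, magicEdgeColor_mk f k d u v⟩
  · rintro ⟨j, hj, rfl⟩
    obtain ⟨u, v, huv, hdist⟩ := hlabels.symm ▸ Set.mem_Icc.mpr ⟨Nat.le_add_left 1 j, hj⟩
    exact ⟨u, v, huv, by rw [magicEdgeColor_mk, hdist, Nat.add_sub_cancel]⟩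

theorem edgeMagicKDTotalColoring_magicColor {m q : ℕ} (hbip : IsBipartitionOf G X Y)
    (hle : ∀ y ∈ Y, f y ≤ m) (hlt : ∀ x ∈ X, ∀ y ∈ Y, G.Adj x y → f x < f y)
    (hlabels : {l : ℕ | ∃ u v : V, G.Adj u v ∧ Nat.dist (f u) (f v) = l} = Set.Icc 1 q)
    (k d : ℕ) :
    EdgeMagicKDTotalColoring G X Y k d q (magicVertexColor X f m k d) (magicEdgeColor f k d) := by
  obtain ⟨-, hXY, hadj⟩ := hbip
  have sum_eq : ∀ x ∈ X, ∀ y ∈ Y, G.Adj x y →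
      magicVertexColor X f m k d x + magicEdgeColor f k d s(x, y) + magicVertexColor X f m k d y =
        2 * k + (m - 1) * d := fun x hx y hy hxy =>
    magicVertexColor_add_magicEdgeColor_add hx (hXY.notMem_of_mem_right hy)
      (hlt x hx y hy hxy) (hle y hy) k d
  refine ⟨kdTotalVertexCond_magicColor hXY m k d, ⟨2 * k + (m - 1) * d, fun u v huv => ?_⟩,
    edgeColorSet_magicEdgeColor hlabels k d⟩
  rcases hadj huv with ⟨hu, hv⟩ | ⟨hu, hv⟩
  · exact sum_eq u hu v hv huv
  · rw [← sum_eq v hv u hu huv.symm, Sym2.eq_swap]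
    ring

theorem KDTotalVertexCond.of_add_mul {k d r s : ℕ} {fV : V → ℕ} {fE : Sym2 V → ℕ}
    (h : KDTotalVertexCond G X Y (k + r * d) (s * d) fV fE) :
    KDTotalVertexCond G X Y k d fV fE := by
  obtain ⟨hX, hY, hE⟩ := h
  have refine_progression {c : ℕ} : (∃ j, c = k + r * d + j * (s * d)) → ∃ j, c = k + j * d := by
    rintro ⟨j, rfl⟩
    exact ⟨r + j * s, by ring⟩
  exact ⟨fun x hx => dvd_of_mul_left_dvd (hX x hx), fun y hy => refine_progression (hY y hy),
    fun u v huv => refine_progression (hE huv)⟩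

theorem arithProgSet_add_two_mul (k d q : ℕ) :
    ArithProgSet (k + d) (2 * d) q = OddArithProgSet k d q := by
  ext c
  constructor
  · rintro ⟨j, hj, rfl⟩
    refine ⟨j + 1, Nat.le_add_left 1 j, hj, ?_⟩
    rw [show 2 * (j + 1) - 1 = 2 * j + 1 by omega]
    ring
  · rintro ⟨j, one_le, le_q, rfl⟩
    refine ⟨j - 1, by omega, ?_⟩
    rw [show 2 * j - 1 = 1 + (j - 1) * 2 by omega]
    ring

theorem EdgeMagicKDTotalColoring.oddEdge {k d q : ℕ} {fV : V → ℕ} {fE : Sym2 V → ℕ}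
    (h : EdgeMagicKDTotalColoring G X Y (k + d) (2 * d) q fV fE) :
    OddEdgeEdgeMagicKDTotalColoring G X Y k d q fV fE := by
  obtain ⟨hcond, hmagic, hcolors⟩ := h
  refine ⟨KDTotalVertexCond.of_add_mul (r := 1) (s := 2) ?_, hmagic,
    hcolors.trans (arithProgSet_add_two_mul k d q)⟩
  rwa [one_mul]

theorem set_ordered_graceful_to_edge_magic_kd_general {m q : ℕ} (hbip : IsBipartitionOf G X Y)
    (hle : ∀ y ∈ Y, f y ≤ m) (hlt : ∀ x ∈ X, ∀ y ∈ Y, G.Adj x y → f x < f y)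
    (hlabels : {l : ℕ | ∃ u v : V, G.Adj u v ∧ Nat.dist (f u) (f v) = l} = Set.Icc 1 q)
    (k d : ℕ) :
    (∃ (fV : V → ℕ) (fE : Sym2 V → ℕ), EdgeMagicKDTotalColoring G X Y k d q fV fE) ∧
    (∃ (fV : V → ℕ) (fE : Sym2 V → ℕ), OddEdgeEdgeMagicKDTotalColoring G X Y k d q fV fE) :=
  ⟨⟨_, _, edgeMagicKDTotalColoring_magicColor hbip hle hlt hlabels k d⟩,
    ⟨_, _, (edgeMagicKDTotalColoring_magicColor hbip hle hlt hlabels (k + d) (2 * d)).oddEdge⟩⟩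

end EdgeMagic

/-- **STATEMENT.** If a connected (bipartite) graph admits a set-ordered graceful labeling,
then it admits the stated `(k,d)`-total coloring and its odd-edge variant. -/
theorem set_ordered_graceful_to_edge_magic_kd
    {V : Type} [Fintype V] [DecidableEq V]
    (G : SimpleGraph V) (X Y : Set V) (f : V → ℕ)
    (hconn : G.Connected) (hbip : IsBipartitionOf G X Y)
    (hq : 1 ≤ Nat.card G.edgeSet)
    (hsog : SetOrderedGracefulLabeling G X Y f (Nat.card G.edgeSet))
    (k d : ℕ) (hk : 1 ≤ k) (hd : 1 ≤ d) :
    (∃ (X' Y' : Set V) (fV : V → ℕ) (fE : Sym2 V → ℕ),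
        IsBipartitionOf G X' Y' ∧
        EdgeMagicKDTotalColoring G X' Y' k d (Nat.card G.edgeSet) fV fE) ∧
    (∃ (X' Y' : Set V) (fV : V → ℕ) (fE : Sym2 V → ℕ),
        IsBipartitionOf G X' Y' ∧
        OddEdgeEdgeMagicKDTotalColoring G X' Y' k d (Nat.card G.edgeSet) fV fE) := by
  obtain ⟨-, hle, hlt, hlabels⟩ := hsog
  obtain ⟨⟨fV, fE, hmagic⟩, ⟨gV, gE, hodd⟩⟩ :=
    set_ordered_graceful_to_edge_magic_kd_general hbip (fun y _ => hle y)
      (fun x hx y hy _ => hlt x hx y hy) hlabels k d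
  exact ⟨⟨X, Y, fV, fE, hbip, hmagic⟩, ⟨X, Y, gV, gE, hbip, hodd⟩⟩
end
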